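/- arXiv:2307.11312 — 3 statements merged into one kernel-verified Lean document; each statement's English description precedes it below -/
import Mathlib

section
/- Let u, v ∈ L²(ℝ³;ℂ) and k, l > 0 be such that the Fourier transform 𝓕u is supported (a.e.) in the closed ball {ξ : |ξ| ≤ k} and 𝓕v is supported (a.e.) in {ξ : |ξ| ≤ l}. Then the pointwise product u·v belongs to L¹(ℝ³;ℂ) and its Fourier integral 𝓕(uv)(ξ) = ∫_{ℝ³} u(x)v(x) e^{−2πi x·ξ} dx vanishes for every ξ with |ξ| > k + l. -/
/-!
Common setup: the Fourier–Plancherel transform on `L²(ℝ³;ℂ)` (Mathlib's unitary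
Fourier transform with kernel `e^{-2πi x·ξ}`), characterized -- uniquely up to a.e.
equality -- by the multiplication formula against Schwartz functions; sharp
frequency cut-offs; Besov norms; and the notion of Leray–Hopf weak solution.
-/

noncomputable section

open MeasureTheory Real Complex Filter Function
open scoped ENNReal NNReal FourierTransform ComplexConjugate Classical

namespace NSE

abbrev V := EuclideanSpace ℝ (Fin 3)

/-- `IsFourierPair u v` says: `u, v ∈ L²(ℝ³;ℂ)` and `v` is (a version of) the
Fourier–Plancherel transform `𝓕u` of `u` (unitary Fourier transform, kernel
`e^{-2πi x·ξ}`), characterized by the multiplication formula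
`∫ v g = ∫ u 𝓕g` for all Schwartz functions `g`. -/
def IsFourierPair (u v : V → ℂ) : Prop :=
  MemLp u 2 volume ∧ MemLp v 2 volume ∧
    ∀ g : SchwartzMap V ℂ,
      ∫ ξ, v ξ * g ξ = ∫ x, u x * FourierTransform.fourier (⇑g) x

/-- The Fourier–Plancherel transform `𝓕u` of `u ∈ L²` (a choice of representative;
`0` if `u ∉ L²`). -/
def FT (u : V → ℂ) : V → ℂ :=
  if h : ∃ v, IsFourierPair u v then h.choose else 0

/-- The inverse Fourier–Plancherel transform `𝓕⁻¹v` of `v ∈ L²` (a choice of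
representative; `0` if `v ∉ L²`). -/
def FTinv (v : V → ℂ) : V → ℂ :=
  if h : ∃ u, IsFourierPair u v then h.choose else 0

/-- Frequency cut-off: `𝓕⁻¹(1_S · 𝓕u)`. -/
def cut (S : Set V) (u : V → ℂ) : V → ℂ := FTinv (S.indicator (FT u))

/-- High-frequency part `u^k = 𝓕⁻¹(1_{|ξ|≥k} 𝓕u)`. -/
def hi (k : ℝ) (u : V → ℂ) : V → ℂ := cut {ξ : V | k ≤ ‖ξ‖} u

/-- Low-frequency part `u_k = 𝓕⁻¹(1_{|ξ|<k} 𝓕u)`. -/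
def lo (k : ℝ) (u : V → ℂ) : V → ℂ := cut {ξ : V | ‖ξ‖ < k} u

/-- Frequency band `u_{h,k} = 𝓕⁻¹(1_{h≤|ξ|<k} 𝓕u)`. -/
def band (h k : ℝ) (u : V → ℂ) : V → ℂ := cut {ξ : V | h ≤ ‖ξ‖ ∧ ‖ξ‖ < k} u

/-- Sharp dyadic piece `Δ_j v = 𝓕⁻¹(1_{2^{j-1}≤|ξ|<2^j} 𝓕v)`. -/
def Δd (j : ℤ) (v : V → ℂ) : V → ℂ := band ((2:ℝ) ^ (j - 1)) ((2:ℝ) ^ j) v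

/-- `Δ̃₀ v = 𝓕⁻¹(1_{|ξ|<1} 𝓕v)`. -/
def Δt0 (v : V → ℂ) : V → ℂ := lo 1 v

/-- The `L^∞` norm (essential sup norm; for the frequency-localized pieces this is
the sup norm of the bounded continuous representative), valued in `[0,∞]`. -/
def nInf (v : V → ℂ) : ℝ≥0∞ := eLpNorm v ⊤ volume

/-- Inhomogeneous Besov norm `‖v‖_{B^σ_{∞,∞}}`, valued in `[0,∞]`. -/
def besov (σ : ℝ) (v : V → ℂ) : ℝ≥0∞ :=
  max (nInf (Δt0 v))
    (⨆ j : {j : ℕ // 1 ≤ j}, ENNReal.ofReal ((2:ℝ) ^ (σ * (j : ℕ))) * nInf (Δd ((j : ℕ) : ℤ) v))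

/-- Homogeneous Besov norm `‖v‖_{Ḃ^{-1}_{∞,∞}} = sup_{j∈ℤ} 2^{-j} ‖Δ_j v‖_∞`,
valued in `[0,∞]`. -/
def hbesovNeg1 (v : V → ℂ) : ℝ≥0∞ :=
  ⨆ j : ℤ, ENNReal.ofReal ((2:ℝ) ^ (-(j : ℝ))) * nInf (Δd j v)

/-- `i`-th component of a vector field, as a complex-valued function. -/
def comp (w : V → V) (i : Fin 3) : V → ℂ := fun x => ((w x i : ℝ) : ℂ)

/-- `|𝓕w(ξ)|²` (sum over the three components), valued in `[0,∞]`. -/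
def frSq (w : V → V) (ξ : V) : ℝ≥0∞ := ∑ i : Fin 3, (‖FT (comp w i) ξ‖₊ : ℝ≥0∞) ^ 2

/-- `∫ |ξ|² |𝓕w(ξ)|² dξ`. -/
def gradSq (w : V → V) : ℝ≥0∞ := ∫⁻ ξ, (‖ξ‖₊ : ℝ≥0∞) ^ 2 * frSq w ξ

/-- `‖∇w‖_{L²}² = ∫ 4π²|ξ|²|𝓕w(ξ)|² dξ`. -/
def gradSq4π (w : V → V) : ℝ≥0∞ :=
  ∫⁻ ξ, ENNReal.ofReal (4 * π ^ 2) * (‖ξ‖₊ : ℝ≥0∞) ^ 2 * frSq w ξ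

/-- `∫ (1+|ξ|²) |𝓕w(ξ)|² dξ` (squared `H¹` norm). -/
def h1Sq (w : V → V) : ℝ≥0∞ := ∫⁻ ξ, (1 + (‖ξ‖₊ : ℝ≥0∞) ^ 2) * frSq w ξ

/-- `∫ (1+|ξ|²)² |𝓕w(ξ)|² dξ` (squared `H²` norm). -/
def h2Sq (w : V → V) : ℝ≥0∞ := ∫⁻ ξ, (1 + (‖ξ‖₊ : ℝ≥0∞) ^ 2) ^ 2 * frSq w ξ

/-- Divergence-free on the Fourier side: `𝓕w(ξ)·ξ = 0` for a.e. `ξ`. -/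
def DivFreeF (w : V → V) : Prop :=
  ∀ᵐ ξ : V, (∑ i : Fin 3, FT (comp w i) ξ * ((ξ i : ℝ) : ℂ)) = 0

/-- Partial derivative `∂_i f (x)` of a scalar field. -/
def pd (f : V → ℝ) (i : Fin 3) (x : V) : ℝ :=
  fderiv ℝ f x (EuclideanSpace.single i (1:ℝ))

/-- A Leray–Hopf weak solution of the 3D Navier–Stokes equations on `(0,∞)×ℝ³`
with viscosity `ν` and divergence-free initial datum `u₀ ∈ L²(ℝ³;ℝ³)`. -/
structure IsLerayHopf (ν : ℝ) (u₀ : V → V) (u : ℝ → V → V) : Prop where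
  /-- measurability of `u` -/
  meas : Measurable (Function.uncurry u)
  /-- `u(t) ∈ L²` for `t > 0` -/
  memL2 : ∀ t : ℝ, 0 < t → MemLp (u t) 2 volume
  /-- (i) `ess sup_{t>0} ‖u(t)‖_{L²} < ∞` -/
  bddL2 : essSup (fun t => eLpNorm (u t) 2 volume) (volume.restrict (Set.Ioi (0:ℝ))) < ⊤
  /-- (i) `∫₀^∞ ∫ |ξ|²|𝓕u(t)(ξ)|² dξ dt < ∞` -/
  gradL2 : (∫⁻ t in Set.Ioi (0:ℝ), gradSq (u t)) < ⊤
  /-- (ii) `u(t)` is divergence-free for a.e. `t` -/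
  divFree : ∀ᵐ t ∂(volume.restrict (Set.Ioi (0:ℝ))), DivFreeF (u t)
  /-- (iii) the weak formulation against smooth compactly supported
  divergence-free test fields -/
  weak : ∀ φ : ℝ → V → V, ContDiff ℝ (⊤ : ℕ∞) (Function.uncurry φ) →
      HasCompactSupport (Function.uncurry φ) →
      (∀ t x, (∑ i : Fin 3, pd (fun y => φ t y i) i x) = 0) →
      (∫ t in Set.Ioi (0:ℝ), ∫ x,
          ((∑ j : Fin 3, u t x j * deriv (fun s => φ s x j) t)
            + ν * (∑ j : Fin 3, u t x j *
                ∑ i : Fin 3, pd (fun y => pd (fun z => φ t z j) i y) i x)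
            + ∑ i : Fin 3, ∑ j : Fin 3, u t x i * u t x j * pd (fun y => φ t y j) i x))
        + (∫ x, ∑ j : Fin 3, u₀ x j * φ 0 x j) = 0
  /-- (iv) the energy inequality for a.e. `t > 0` -/
  energy : ∀ᵐ t ∂(volume.restrict (Set.Ioi (0:ℝ))),
      (1/2 : ℝ≥0∞) * eLpNorm (u t) 2 volume ^ 2
          + ENNReal.ofReal ν * ∫⁻ τ in Set.Ioc (0:ℝ) t, gradSq4π (u τ)
        ≤ (1/2 : ℝ≥0∞) * eLpNorm u₀ 2 volume ^ 2

/-- `u` is regular in `(0,T]`: `u ∈ L^∞(0,T;H¹) ∩ L²(0,T;H²)`. -/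
def RegularOn (u : ℝ → V → V) (T : ℝ) : Prop :=
  essSup (fun t => h1Sq (u t)) (volume.restrict (Set.Ioo (0:ℝ) T)) < ⊤ ∧
    (∫⁻ t in Set.Ioo (0:ℝ) T, h2Sq (u t)) < ⊤

/-- Besov norm of a vector field: the largest Besov norm of its components. -/
def besovV (σ : ℝ) (w : V → V) : ℝ≥0∞ := ⨆ i : Fin 3, besov σ (comp w i)

/-- Uniqueness. -/
theorem pair_toLp {a A : V → ℂ} (h : IsFourierPair a A) :
    h.2.1.toLp A = FourierTransform.fourier (h.1.toLp a) := by
  obtain ⟨ha, hA, h⟩ := h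
  have hinj := LinearMap.ker_eq_bot.mp
    (Lp.ker_toTemperedDistributionCLM_eq_bot (E := V) (F := ℂ) (μ := volume) (p := 2))
  apply hinj
  change Lp.toTemperedDistribution (hA.toLp A) = Lp.toTemperedDistribution _
  rw [← Lp.fourier_toTemperedDistribution_eq]
  ext g
  rw [TemperedDistribution.fourier_apply, Lp.toTemperedDistribution_apply,
    Lp.toTemperedDistribution_apply]
  have h1 : ∫ x, g x • (hA.toLp A) x = ∫ x, A x * g x := by
    apply integral_congr_ae
    filter_upwards [hA.coeFn_toLp] with x hx
    rw [hx, smul_eq_mul, mul_comm]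
  have h2 : ∫ x, (FourierTransform.fourier g) x • (ha.toLp a) x
      = ∫ x, a x * FourierTransform.fourier (⇑g) x := by
    apply integral_congr_ae
    filter_upwards [ha.coeFn_toLp] with x hx
    rw [hx, smul_eq_mul, mul_comm, SchwartzMap.fourier_coe]
  rw [h1, h2, h g]

/-- Existence. -/
theorem isFourierPair_FT {u : V → ℂ} (hu : MemLp u 2 volume) : IsFourierPair u (FT u) := by
  have hex : ∃ v, IsFourierPair u v := by
    refine ⟨(FourierTransform.fourier (hu.toLp u) : Lp ℂ 2 (volume : Measure V)), hu,
      Lp.memLp _, fun g => ?_⟩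
    have h0 := congrArg (fun T => T g) (Lp.fourier_toTemperedDistribution_eq (hu.toLp u))
    simp only [TemperedDistribution.fourier_apply, Lp.toTemperedDistribution_apply] at h0
    have h2 : ∫ x, (FourierTransform.fourier g) x • (hu.toLp u) x
        = ∫ x, u x * FourierTransform.fourier (⇑g) x := by
      apply integral_congr_ae
      filter_upwards [hu.coeFn_toLp] with x hx
      rw [hx, smul_eq_mul, mul_comm, SchwartzMap.fourier_coe]
    rw [← h2, h0]
    simp only [smul_eq_mul, mul_comm]
  unfold FT
  rw [dif_pos hex]
  exact hex.choose_spec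

/-- Multiplication formula in `L²`. -/
theorem integral_fourier_mul_Lp (f h : Lp ℂ 2 (volume : Measure V)) :
    ∫ x, (FourierTransform.fourier f : Lp ℂ 2 (volume : Measure V)) x * h x
      = ∫ x, f x * (FourierTransform.fourier h : Lp ℂ 2 (volume : Measure V)) x := by
  have key : ∀ f h : Lp ℂ 2 (volume : Measure V),
      (ContinuousLinearMap.mul ℂ ℂ).lpPairing volume 2 2 f h = ∫ x, f x * h x := by
    intro f h
    rw [ContinuousLinearMap.lpPairing_eq_integral]
    rfl
  rw [← key, ← key]
  refine DenseRange.induction_on (p := fun h : Lp ℂ 2 (volume : Measure V) =>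
    (ContinuousLinearMap.mul ℂ ℂ).lpPairing volume 2 2 (FourierTransform.fourier f) h
      = (ContinuousLinearMap.mul ℂ ℂ).lpPairing volume 2 2 f (FourierTransform.fourier h))
    (SchwartzMap.denseRange_toLpCLM (p := 2) ENNReal.ofNat_ne_top) h ?_ ?_
  · apply isClosed_eq
    · exact ContinuousLinearMap.continuous _
    · exact (ContinuousLinearMap.continuous _).comp
        (FourierTransform.fourierCLM ℂ (Lp ℂ 2 (volume : Measure V))).continuous
  · intro g
    rw [SchwartzMap.toLpCLM_apply, SchwartzMap.toLp_fourier_eq, key, key]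
    have h0 := congrArg (fun T => T g) (Lp.fourier_toTemperedDistribution_eq f)
    simp only [TemperedDistribution.fourier_apply, Lp.toTemperedDistribution_apply] at h0
    refine Eq.trans ?_ (h0.symm.trans ?_)
    · apply integral_congr_ae
      filter_upwards [g.coeFn_toLp 2 volume] with x hx
      rw [hx, smul_eq_mul, mul_comm]
    · apply integral_congr_ae
      filter_upwards [(FourierTransform.fourier g).coeFn_toLp 2 volume] with x hx
      rw [hx, smul_eq_mul, mul_comm]

theorem pair_mul {a A b B : V → ℂ} (h : IsFourierPair a A) (h' : IsFourierPair b B) :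
    ∫ x, A x * b x = ∫ x, a x * B x := by
  have h0 := integral_fourier_mul_Lp (h.1.toLp a) (h'.1.toLp b)
  rw [← pair_toLp h, ← pair_toLp h'] at h0
  refine Eq.trans ?_ (h0.trans ?_)
  · apply integral_congr_ae
    filter_upwards [h.2.1.coeFn_toLp, h'.1.coeFn_toLp] with x h1 h2
    rw [h1, h2]
  · apply integral_congr_ae
    filter_upwards [h.1.coeFn_toLp, h'.2.1.coeFn_toLp] with x h1 h2
    rw [h1, h2]

theorem fourier_reflect (g : SchwartzMap V ℂ) (ξ x : V) :
    FourierTransform.fourier (fun ζ => FourierTransform.fourier (⇑g) (ξ - ζ)) x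
      = ((Real.fourierChar (-inner ℝ x ξ) : Circle) : ℂ) * g x := by
  have hinv : FourierTransformInv.fourierInv (FourierTransform.fourier (⇑g)) x = g x := by
    have := (g.continuous.fourierInv_fourier_eq g.integrable
      (FourierTransform.fourier g).integrable)
    exact congrFun this x
  rw [← hinv, Real.fourier_eq, Real.fourierInv_eq, ← integral_const_mul,
    ← integral_sub_left_eq_self _ volume ξ]
  congr 1
  ext η
  simp only [sub_sub_cancel, Circle.smul_def, smul_eq_mul]
  rw [← mul_assoc, ← Circle.coe_mul, ← AddChar.map_add_eq_mul]
  congr 3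
  rw [inner_sub_left, real_inner_comm ξ x]
  ring

theorem pair_shift {v W : V → ℂ} (h : IsFourierPair v W) (ξ : V) :
    IsFourierPair (fun η => W (ξ - η)) (fun x => ((Real.fourierChar (-inner ℝ x ξ) : Circle) : ℂ) * v x) := by
  refine ⟨h.2.1.comp_measurePreserving (Measure.measurePreserving_sub_left volume ξ), ?_, fun g => ?_⟩
  · refine h.1.of_le (AEStronglyMeasurable.mul ?_ h.1.1) (ae_of_all _ fun x => ?_)
    · apply Continuous.aestronglyMeasurable
      fun_prop
    · have hn : ‖((Real.fourierChar (-inner ℝ x ξ) : Circle) : ℂ)‖ = 1 := Circle.norm_coe _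
      rw [norm_mul, hn, one_mul]
  · have hT : (fun η : V => ξ - η).HasTemperateGrowth := by fun_prop
    have hL : AntilipschitzWith 1 (fun η : V => ξ - η) :=
      AntilipschitzWith.of_le_mul_dist fun x y => by
        rw [dist_sub_left, NNReal.coe_one, one_mul]
    have h0 := h.2.2 (SchwartzMap.compCLMOfAntilipschitz ℂ hT hL (FourierTransform.fourier g))
    have e : (⇑(SchwartzMap.compCLMOfAntilipschitz ℂ hT hL (FourierTransform.fourier g)))
        = fun ζ => FourierTransform.fourier (⇑g) (ξ - ζ) := rfl
    rw [e] at h0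
    simp only [fourier_reflect] at h0
    have h1 : ∫ x, W (ξ - x) * FourierTransform.fourier (⇑g) x
        = ∫ x, W x * FourierTransform.fourier (⇑g) (ξ - x) := by
      rw [← integral_sub_left_eq_self _ volume ξ]
      simp only [sub_sub_cancel]
    rw [h1, h0]
    congr 1
    ext x
    ring

/-- If `𝓕u` is supported in `{|ξ| ≤ k}` and `𝓕v` in `{|ξ| ≤ l}`,
then `uv ∈ L¹` and its Fourier integral vanishes for `|ξ| > k + l`. -/
theorem fourierIntegral_mul_eq_zero_of_support
    (u v : V → ℂ) (hu : MemLp u 2 volume) (hv : MemLp v 2 volume)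
    (k l : ℝ) (hk : 0 < k) (hl : 0 < l)
    (hsu : ∀ᵐ ξ : V, k < ‖ξ‖ → FT u ξ = 0)
    (hsv : ∀ᵐ ξ : V, l < ‖ξ‖ → FT v ξ = 0) :
    Integrable (fun x => u x * v x) volume ∧
      ∀ ξ : V, k + l < ‖ξ‖ → FourierTransform.fourier (fun x => u x * v x) ξ = 0 := by
  have hU := isFourierPair_FT hu
  have hW := isFourierPair_FT hv
  refine ⟨hu.integrable_mul hv, fun ξ hξ => ?_⟩
  have h := pair_mul hU (pair_shift hW ξ)
  have hz : ∫ η, FT u η * FT v (ξ - η) = 0 := by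
    apply integral_eq_zero_of_ae
    filter_upwards [hsu,
      (Measure.measurePreserving_sub_left volume ξ).quasiMeasurePreserving.ae hsv] with η h1 h2
    by_cases hη : k < ‖η‖
    · simp [h1 hη]
    · have : l < ‖ξ - η‖ := by
        have := norm_sub_norm_le ξ η
        linarith
      simp [h2 this]
  rw [hz] at h
  rw [Real.fourier_eq, h]
  congr 1
  ext x
  rw [Circle.smul_def, smul_eq_mul]
  ring

end NSE
end
end

section
/- Let μ be a measure on ℝ³, let s ≥ 1 be a natural number, let m̃ > 1 be a real number, and let l be a natural number with l ≥ 1/(m̃^{1/s} − 1). Write H(r) := μ{ξ : |ξ| ≥ r} and A(r₁,r₂) := μ{ξ : r₁ ≤ |ξ| < r₂}. Then, in [0,∞]: Σ_{j=l}^∞ A(j^s/2, m̃·j^s) ≤ H(l^s/2) + ((2m̃)^{1/s} − 1)·( l·A(l^s/2, m̃·l^s) + Σ_{j=l}^∞ j·A(j^s, (j+1)^s) ). (Applied in the paper with dμ = |ξ|²|𝓕u(ξ)|²dξ, this bounds Σ_{j≥l}‖∇u_{j^s/2, m̃ j^s}‖_{L²}².) -/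
/-!
Common setup: the Fourier–Plancherel transform on `L²(ℝ³;ℂ)` (Mathlib's unitary
Fourier transform with kernel `e^{-2πi x·ξ}`), characterized -- uniquely up to a.e.
equality -- by the multiplication formula against Schwartz functions; sharp
frequency cut-offs; Besov norms; and the notion of Leray–Hopf weak solution.
-/

noncomputable section

open MeasureTheory Real Complex Filter Function
open scoped ENNReal NNReal FourierTransform ComplexConjugate Classical

namespace NSE

theorem tsum_count_aux (X : ℕ → Prop) [DecidablePred X] (l p q : ℕ) (h : ∀ n, X n → p < l + n ∧ l + n ≤ q) :
    ∑' n : ℕ, (if X n then (1 : ℝ≥0∞) else 0) ≤ ((q - p : ℕ) : ℝ≥0∞) := by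
  rw [tsum_eq_sum (s := Finset.Ico (p + 1 - l) (q + 1 - l))]
  · calc ∑ n ∈ Finset.Ico (p + 1 - l) (q + 1 - l), (if X n then (1 : ℝ≥0∞) else 0)
        ≤ ∑ n ∈ Finset.Ico (p + 1 - l) (q + 1 - l), (1 : ℝ≥0∞) := by
          apply Finset.sum_le_sum
          intro n _
          split_ifs <;> simp
      _ = (((q + 1 - l) - (p + 1 - l) : ℕ) : ℝ≥0∞) := by simp
      _ ≤ _ := by
          apply Nat.cast_le.mpr
          omega
  · intro n hn
    rw [if_neg]
    intro hX
    have := h n hX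
    apply hn
    rw [Finset.mem_Ico]
    omega

theorem nat_le_one_add_aux (k j : ℕ) (c : ℝ) (hc : 0 ≤ c) (h : (k : ℝ) ≤ 1 + c * j) :
    (k : ℝ≥0∞) ≤ 1 + ENNReal.ofReal c * (j : ℝ≥0∞) := by
  rw [← ENNReal.ofReal_natCast k, ← ENNReal.ofReal_natCast j, ← ENNReal.ofReal_one,
    ← ENNReal.ofReal_mul hc, ← ENNReal.ofReal_add zero_le_one (by positivity)]
  exact ENNReal.ofReal_le_ofReal h

theorem pointwise_aux (s : ℕ) (hs : 1 ≤ s) (mt : ℝ) (hmt : 1 < mt)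
    (l : ℕ) (hl : 1 / (mt ^ ((1 : ℝ) / s) - 1) ≤ (l : ℝ)) (t : ℝ) (ht : 0 ≤ t) :
    (∑' n : ℕ, (if ((l + n : ℕ) : ℝ) ^ s / 2 ≤ t ∧ t < mt * ((l + n : ℕ) : ℝ) ^ s
        then (1 : ℝ≥0∞) else 0))
      ≤ (if (l : ℝ) ^ s / 2 ≤ t then (1 : ℝ≥0∞) else 0)
        + ENNReal.ofReal ((2 * mt) ^ ((1 : ℝ) / s) - 1) *
          ((l : ℝ≥0∞) * (if (l : ℝ) ^ s / 2 ≤ t ∧ t < mt * (l : ℝ) ^ s then (1 : ℝ≥0∞) else 0)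
            + ∑' n : ℕ, ((l + n : ℕ) : ℝ≥0∞) *
                (if ((l + n : ℕ) : ℝ) ^ s ≤ t ∧ t < ((l + n + 1 : ℕ) : ℝ) ^ s
                  then (1 : ℝ≥0∞) else 0)) := by
  have hs0 : s ≠ 0 := by omega
  by_cases h0 : (l : ℝ) ^ s / 2 ≤ t
  swap
  · have : ∀ n : ℕ, ¬ (((l + n : ℕ) : ℝ) ^ s / 2 ≤ t ∧ t < mt * ((l + n : ℕ) : ℝ) ^ s) := by
      rintro n ⟨h1, -⟩
      apply h0
      refine le_trans ?_ h1
      have : (l : ℝ) ≤ ((l + n : ℕ) : ℝ) := by exact_mod_cast Nat.le_add_right l n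
      gcongr
    simp only [this, if_false, tsum_zero, zero_le]
  rw [if_pos h0]
  obtain ⟨d, hd, hd1⟩ : ∃ d : ℝ, d = mt ^ ((1 : ℝ) / s) ∧ 1 < d :=
    ⟨_, rfl, Real.one_lt_rpow hmt (by positivity)⟩
  have hds : d ^ s = mt := by
    rw [hd, one_div]; exact Real.rpow_inv_natCast_pow (by linarith) hs0
  obtain ⟨c, hc, hc1⟩ : ∃ c : ℝ, c = (2 * mt) ^ ((1 : ℝ) / s) ∧ 1 < c :=
    ⟨_, rfl, Real.one_lt_rpow (by linarith) (by positivity)⟩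
  have hcs : c ^ s = 2 * mt := by
    rw [hc, one_div]; exact Real.rpow_inv_natCast_pow (by linarith) hs0
  obtain ⟨r, hr0, hrs⟩ : ∃ r : ℝ, 0 ≤ r ∧ r ^ s = t :=
    ⟨t ^ ((s : ℝ)⁻¹), by positivity, Real.rpow_inv_natCast_pow ht hs0⟩
  rw [← hd] at hl
  rw [← hc]
  obtain ⟨a, ha0, had⟩ : ∃ a : ℝ, 0 ≤ a ∧ r = d * a :=
    ⟨r / d, by positivity, by field_simp⟩
  -- translation of the inequalities
  have lowI : ∀ x : ℝ, 0 ≤ x → (x ^ s / 2 ≤ t ↔ x ≤ c * a) := by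
    intro x hx
    rw [← pow_le_pow_iff_left₀ hx (by positivity) hs0, mul_pow, hcs, ← hrs, had, mul_pow, hds]
    constructor <;> intro h <;> linarith
  have highI : ∀ x : ℝ, 0 ≤ x → (t < mt * x ^ s ↔ a < x) := by
    intro x hx
    rw [← pow_lt_pow_iff_left₀ ha0 hx hs0, ← hrs, had, mul_pow, hds]
    constructor
    · intro h
      exact lt_of_mul_lt_mul_left h (by linarith)
    · intro h
      exact mul_lt_mul_of_pos_left h (by linarith)
  have hlpos : (0 : ℝ) < l := lt_of_lt_of_le (by have : 0 < d - 1 := by linarith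
                                                 positivity) hl
  have hb : (l : ℝ) ≤ c * a := (lowI l hlpos.le).1 h0
  have hcb0 : 0 ≤ c * a := by positivity
  by_cases h1 : t < mt * (l : ℝ) ^ s
  · have hal := (highI l hlpos.le).1 h1
    rw [if_pos ⟨h0, h1⟩]
    have hl1 : 1 ≤ l := by exact_mod_cast hlpos
    refine (tsum_count_aux _ l (l - 1) ⌊c * a⌋₊ ?_).trans ?_
    · rintro n ⟨h2, -⟩
      exact ⟨by omega, Nat.le_floor ((lowI _ (by positivity)).1 h2)⟩
    refine (nat_le_one_add_aux _ l (c - 1) (by linarith) ?_).trans ?_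
    · have hfl : l ≤ ⌊c * a⌋₊ := Nat.le_floor hb
      have hfb := Nat.floor_le hcb0
      have e : ⌊c * a⌋₊ - (l - 1) + l = ⌊c * a⌋₊ + 1 := by omega
      have e' : ((⌊c * a⌋₊ - (l - 1) : ℕ) : ℝ) + l = ⌊c * a⌋₊ + 1 := by exact_mod_cast e
      nlinarith
    · rw [mul_one]
      gcongr
      exact le_self_add
  · have hal : (l : ℝ) ≤ a := by
      by_contra h
      exact h1 ((highI l hlpos.le).2 (not_le.1 h))
    have har : a ≤ r := by rw [had]; nlinarith
    have hlj : l ≤ ⌊r⌋₊ := Nat.le_floor (hal.trans har)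
    obtain ⟨n, hn⟩ := Nat.exists_eq_add_of_le hlj
    have hj1 : ((l + n : ℕ) : ℝ) ≤ r := by rw [← hn]; exact Nat.floor_le hr0
    have hj2 : r < ((l + n + 1 : ℕ) : ℝ) := by
      rw [← hn]; push_cast; exact Nat.lt_floor_add_one r
    have haj : a ≤ ((l + n : ℕ) : ℝ) := by
      have hx : 1 ≤ l * (d - 1) := by
        rwa [div_le_iff₀ (by linarith)] at hl
      by_contra h
      push Not at h
      push_cast at h hj2
      have hn0 : (0 : ℝ) ≤ n := by positivity
      nlinarith
    refine (tsum_count_aux _ l ⌊a⌋₊ ⌊c * a⌋₊ ?_).trans ?_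
    · rintro k ⟨h2, h3⟩
      exact ⟨(Nat.floor_lt ha0).2 ((highI _ (by positivity)).1 h3),
        Nat.le_floor ((lowI _ (by positivity)).1 h2)⟩
    refine (nat_le_one_add_aux _ (l + n) (c - 1) (by linarith) ?_).trans ?_
    · have hfl : ⌊a⌋₊ ≤ ⌊c * a⌋₊ := Nat.floor_le_floor (by nlinarith)
      rw [Nat.cast_sub hfl]
      have hfb := Nat.floor_le hcb0
      have hfa := Nat.lt_floor_add_one a
      have := mul_le_mul_of_nonneg_left haj (show 0 ≤ c - 1 by linarith)
      linarith
    · gcongr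
      refine le_trans ?_ le_add_self
      refine le_trans ?_ (ENNReal.le_tsum n)
      rw [if_pos, mul_one]
      rw [← hrs]
      exact ⟨by gcongr, by gcongr⟩

/-- The annulus-superposition estimate for an arbitrary measure
`μ` on `ℝ³`: with `H(r) = μ{|ξ|≥r}` and `A(r₁,r₂) = μ{r₁≤|ξ|<r₂}`,
`Σ_{j≥l} A(j^s/2, m̃ j^s) ≤ H(l^s/2) + ((2m̃)^{1/s}-1)(l·A(l^s/2, m̃ l^s)
+ Σ_{j≥l} j·A(j^s,(j+1)^s))`. -/
theorem tsum_annulus_le (μ : Measure V) (s : ℕ) (hs : 1 ≤ s) (mt : ℝ) (hmt : 1 < mt)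
    (l : ℕ) (hl : 1 / (mt ^ ((1 : ℝ) / s) - 1) ≤ (l : ℝ)) :
    (∑' n : ℕ, μ {ξ : V | ((l + n : ℕ) : ℝ) ^ s / 2 ≤ ‖ξ‖ ∧ ‖ξ‖ < mt * ((l + n : ℕ) : ℝ) ^ s})
      ≤ μ {ξ : V | (l : ℝ) ^ s / 2 ≤ ‖ξ‖}
        + ENNReal.ofReal ((2 * mt) ^ ((1 : ℝ) / s) - 1) *
          ((l : ℝ≥0∞) * μ {ξ : V | (l : ℝ) ^ s / 2 ≤ ‖ξ‖ ∧ ‖ξ‖ < mt * (l : ℝ) ^ s}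
            + ∑' n : ℕ, ((l + n : ℕ) : ℝ≥0∞) *
                μ {ξ : V | ((l + n : ℕ) : ℝ) ^ s ≤ ‖ξ‖ ∧ ‖ξ‖ < ((l + n + 1 : ℕ) : ℝ) ^ s}) := by
  have hm1 : ∀ x : ℝ, MeasurableSet {ξ : V | x ≤ ‖ξ‖} := fun x =>
    measurableSet_le measurable_const measurable_norm
  have hm2 : ∀ x y : ℝ, MeasurableSet {ξ : V | x ≤ ‖ξ‖ ∧ ‖ξ‖ < y} := fun x y =>
    (hm1 x).inter (measurableSet_lt measurable_norm measurable_const)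
  have k1 : ∀ x : ℝ, μ {ξ : V | x ≤ ‖ξ‖} = ∫⁻ ξ, (if x ≤ ‖ξ‖ then (1 : ℝ≥0∞) else 0) ∂μ := by
    intro x
    rw [← lintegral_indicator_one (hm1 x)]
    rfl
  have k2 : ∀ x y : ℝ, μ {ξ : V | x ≤ ‖ξ‖ ∧ ‖ξ‖ < y}
      = ∫⁻ ξ, (if x ≤ ‖ξ‖ ∧ ‖ξ‖ < y then (1 : ℝ≥0∞) else 0) ∂μ := by
    intro x y
    rw [← lintegral_indicator_one (hm2 x y)]
    congr 1
    ext ξ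
    simp only [Set.indicator_apply, Set.mem_ofPred_eq, Pi.one_apply]
  have m1 : ∀ x : ℝ, Measurable fun ξ : V => (if x ≤ ‖ξ‖ then (1 : ℝ≥0∞) else 0) :=
    fun x => Measurable.ite (hm1 x) measurable_const measurable_const
  have m2 : ∀ x y : ℝ, Measurable fun ξ : V =>
      (if x ≤ ‖ξ‖ ∧ ‖ξ‖ < y then (1 : ℝ≥0∞) else 0) :=
    fun x y => Measurable.ite (hm2 x y) measurable_const measurable_const
  simp only [k1, k2]
  rw [← lintegral_tsum (fun n => (m2 _ _).aemeasurable), ← lintegral_const_mul _ (m2 _ _)]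
  simp_rw [fun (n : ℕ) (x y : ℝ) => (lintegral_const_mul (μ := μ) (n : ℝ≥0∞) (m2 x y)).symm]
  rw [← lintegral_tsum (fun n => ((m2 _ _).const_mul _).aemeasurable),
    ← lintegral_add_left ((m2 _ _).const_mul _),
    ← lintegral_const_mul _ (Measurable.fun_add ((m2 _ _).const_mul _)
      (Measurable.tsum fun n => (m2 _ _).const_mul _)),
    ← lintegral_add_left (m1 _)]
  exact lintegral_mono fun ξ => pointwise_aux s hs mt hmt l hl ‖ξ‖ (norm_nonneg ξ)

end NSE
end
end

section
/- Let v : ℝ³ → ℝ³ be continuously differentiable with compact support and divergence-free (Σ_{i=1}^3 ∂_i v_i(x) = 0 for all x), and let w : ℝ³ → ℝ³ be continuously differentiable. Then ∫_{ℝ³} ((v·∇)w)(x) · w(x) dx = 0, where ((v·∇)w)_j := Σ_{i=1}^3 v_i ∂_i w_j and · denotes the Euclidean inner product on ℝ³. -/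
/-!
Common setup: the Fourier–Plancherel transform on `L²(ℝ³;ℂ)` (Mathlib's unitary
Fourier transform with kernel `e^{-2πi x·ξ}`), characterized -- uniquely up to a.e.
equality -- by the multiplication formula against Schwartz functions; sharp
frequency cut-offs; Besov norms; and the notion of Leray–Hopf weak solution.
-/

noncomputable section

open MeasureTheory Real Complex Filter Function
open scoped ENNReal NNReal FourierTransform ComplexConjugate Classical

namespace NSE

/-- The cancellation property `((v·∇)w, w)_{L²} = 0` for a `C¹`
compactly supported divergence-free field `v` and a `C¹` field `w`. -/
theorem integral_convection_inner_eq_zero (v w : V → V)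
    (hv : ContDiff ℝ 1 v) (hvs : HasCompactSupport v)
    (hvdiv : ∀ x : V, (∑ i : Fin 3, pd (fun y => v y i) i x) = 0)
    (hw : ContDiff ℝ 1 w) :
    ∫ x : V, ∑ j : Fin 3, (∑ i : Fin 3, v x i * pd (fun y => w y j) i x) * w x j = 0 := by
  have hvi : ∀ i : Fin 3, ContDiff ℝ 1 (fun y => v y i) := fun i => contDiff_euclidean.1 hv i
  have hwj : ∀ j : Fin 3, ContDiff ℝ 1 (fun y => w y j) := fun j => contDiff_euclidean.1 hw j
  have hvc : ∀ i : Fin 3, HasCompactSupport (fun y => v y i) := fun i =>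
    hvs.comp_left (g := fun z : V => z i) rfl
  have hpc : ∀ (f : V → ℝ), ContDiff ℝ 1 f → ∀ i : Fin 3,
      Continuous (fun x => fderiv ℝ f x (EuclideanSpace.single i (1:ℝ))) := fun f hf i =>
    (hf.continuous_fderiv (by norm_num)).clm_apply continuous_const
  set q : V → ℝ := fun y => ∑ j : Fin 3, w y j ^ 2 with hq
  have hqd : ContDiff ℝ 1 q := ContDiff.sum fun j _ => (hwj j).pow 2
  have hpq : ∀ (i : Fin 3) (x : V), fderiv ℝ q x (EuclideanSpace.single i (1:ℝ))
      = 2 * ∑ j : Fin 3, w x j * pd (fun y => w y j) i x := by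
    intro i x
    have h : HasFDerivAt q (∑ j : Fin 3, (2 * w x j) • fderiv ℝ (fun y => w y j) x) x := by
      refine HasFDerivAt.fun_sum fun j _ => ?_
      have := (((hwj j).differentiable (by norm_num)) x).hasFDerivAt.pow 2
      simpa using this
    rw [h.fderiv]
    simp [pd, Finset.mul_sum, mul_assoc]
  have hi1 : ∀ i : Fin 3, Integrable
      (fun x => v x i * fderiv ℝ q x (EuclideanSpace.single i (1:ℝ))) := fun i =>
    ((hvi i).continuous.mul (hpc q hqd i)).integrable_of_hasCompactSupport (hvc i).mul_right
  have hi2 : ∀ i : Fin 3, Integrable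
      (fun x => fderiv ℝ (fun y => v y i) x (EuclideanSpace.single i (1:ℝ)) * q x) := fun i =>
    ((hpc _ (hvi i) i).mul hqd.continuous).integrable_of_hasCompactSupport
      (((hvc i).fderiv_apply (𝕜 := ℝ) _).mul_right)
  have hi3 : ∀ i : Fin 3, Integrable (fun x => v x i * q x) := fun i =>
    ((hvi i).continuous.mul hqd.continuous).integrable_of_hasCompactSupport (hvc i).mul_right
  have hparts : ∀ i : Fin 3, ∫ x, v x i * fderiv ℝ q x (EuclideanSpace.single i (1:ℝ))
      = - ∫ x, fderiv ℝ (fun y => v y i) x (EuclideanSpace.single i (1:ℝ)) * q x := fun i =>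
    integral_mul_fderiv_eq_neg_fderiv_mul_of_integrable (hi2 i) (hi1 i) (hi3 i)
      (fun x _ => (hvi i).differentiable (by norm_num) x)
      (fun x _ => hqd.differentiable (by norm_num) x)
  have hfun : (fun x : V => ∑ j : Fin 3, (∑ i : Fin 3, v x i * pd (fun y => w y j) i x) * w x j)
      = fun x => (1/2 : ℝ) *
        ∑ i : Fin 3, v x i * fderiv ℝ q x (EuclideanSpace.single i (1:ℝ)) := by
    funext x
    simp only [hpq, Fin.sum_univ_three]
    ring
  rw [hfun, integral_const_mul, integral_finsetSum _ (fun i _ => hi1 i),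
    Finset.sum_congr rfl (fun i _ => hparts i), Finset.sum_neg_distrib,
    ← integral_finsetSum _ (fun i _ => hi2 i)]
  have hz : ∀ x, ∑ i : Fin 3,
      fderiv ℝ (fun y => v y i) x (EuclideanSpace.single i (1:ℝ)) * q x = 0 := by
    intro x
    rw [← Finset.sum_mul]
    have := hvdiv x
    simp only [pd] at this
    rw [this, zero_mul]
  simp only [hz, integral_zero, neg_zero, mul_zero]

end NSE
end
end
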